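/- arXiv:2504.14392 — 4 statements merged into one kernel-verified Lean document; each statement's English description precedes it below -/
import Mathlib

section
/- Let 0 ≤ l < k ≤ n and define F(λ) := (H_k(λ)/H_l(λ))^{1/(k−l)} on the Gårding cone Γ_k ⊂ ℝⁿ. Then F is concave on Γ_k: for all λ, μ ∈ Γ_k and all t ∈ [0,1] such that (1−t)λ + tμ ∈ Γ_k, one has F((1−t)λ + tμ) ≥ (1−t)F(λ) + tF(μ). -/
/-- The `k`-th elementary symmetric polynomial of `lam : Fin n → ℝ`,
with the conventions `σ₀ = 1` and `σ_k = 0` for `k > n`. -/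
noncomputable def esym (n k : ℕ) (lam : Fin n → ℝ) : ℝ :=
  ∑ s ∈ Finset.powersetCard k (Finset.univ : Finset (Fin n)), ∏ i ∈ s, lam i

/-- The normalized elementary symmetric polynomial `H_k = σ_k / C(n,k)`. -/
noncomputable def Hnorm (n k : ℕ) (lam : Fin n → ℝ) : ℝ :=
  esym n k lam / (n.choose k : ℝ)

/-- The Gårding cone `Γ_k = {λ : σ_i(λ) > 0 for all 1 ≤ i ≤ k}`. -/
def gardingCone (n k : ℕ) : Set (Fin n → ℝ) :=
  {lam | ∀ i : ℕ, 1 ≤ i → i ≤ k → 0 < esym n i lam}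

/-- The quotient function `F = (H_k/H_l)^{1/(k-l)}`. -/
noncomputable def Fquot (n k l : ℕ) (lam : Fin n → ℝ) : ℝ :=
  (Hnorm n k lam / Hnorm n l lam) ^ ((1 : ℝ) / ((k : ℝ) - (l : ℝ)))

open Polynomial in
/-- Derivatives of real-rooted polynomials are real-rooted (Rolle). -/
theorem splits_derivative_real (p : ℝ[X]) (hp : p.Splits) : (derivative p).Splits := by
  rw [splits_iff_card_roots] at hp ⊢
  have h1 := card_roots_le_derivative p
  have h2 := card_roots' (derivative p)
  have h3 := natDegree_derivative_le p
  by_cases h : p.natDegree = 0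
  · rw [derivative_of_natDegree_zero h]; simp
  · omega

open Polynomial in
theorem splits_iterate_derivative_real (p : ℝ[X]) (hp : p.Splits) (m : ℕ) :
    (derivative^[m] p).Splits := by
  induction m with
  | zero => simpa using hp
  | succ m ih =>
    rw [Function.iterate_succ_apply']
    exact splits_derivative_real _ ih

open Polynomial in
/-- Laguerre's inequality at zero. -/
theorem laguerre_zero (p : ℝ[X]) (hp : p.Splits) :
    2 * (p.coeff 0 * p.coeff 2) ≤ p.coeff 1 ^ 2 := by
  induction hp using Submonoid.closure_induction with
  | mem x hx =>
    rcases hx with ⟨a, rfl⟩ | ⟨a, rfl⟩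
    · simp [coeff_C]
    · simp [coeff_C, coeff_X]
  | one => simp [coeff_one]
  | mul f g _ _ hf hg =>
    have e0 : (f * g).coeff 0 = f.coeff 0 * g.coeff 0 := mul_coeff_zero f g
    have e1 : (f * g).coeff 1 = f.coeff 0 * g.coeff 1 + f.coeff 1 * g.coeff 0 := mul_coeff_one f g
    have e2 : (f * g).coeff 2 =
        f.coeff 0 * g.coeff 2 + f.coeff 1 * g.coeff 1 + f.coeff 2 * g.coeff 0 := by
      rw [coeff_mul, Finset.Nat.sum_antidiagonal_eq_sum_range_succ_mk]
      simp [Finset.sum_range_succ]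
    rw [e0, e1, e2]
    nlinarith [mul_le_mul_of_nonneg_left hg (sq_nonneg (f.coeff 0)),
      mul_le_mul_of_nonneg_left hf (sq_nonneg (g.coeff 0))]

open Polynomial in
/-- A weak form of Newton's inequality. -/
theorem newton_splits (p : ℝ[X]) (hp : p.Splits) (m : ℕ) :
    p.coeff m * p.coeff (m + 2) ≤ p.coeff (m + 1) ^ 2 := by
  have h := laguerre_zero _ (splits_iterate_derivative_real p hp m)
  simp only [coeff_iterate_derivative, nsmul_eq_mul] at h
  have d0 : (0 + m).descFactorial m = m.factorial := by
    rw [zero_add, Nat.descFactorial_self]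
  have d1 : (1 + m).descFactorial m = (m + 1) * m.factorial := by
    have := Nat.factorial_mul_descFactorial (show m ≤ 1 + m by omega)
    rw [show 1 + m - m = 1 by omega] at this
    rw [Nat.factorial_one, one_mul] at this
    rw [this, add_comm, Nat.factorial_succ]
  have d2 : 2 * (2 + m).descFactorial m = (m + 2) * ((m + 1) * m.factorial) := by
    have := Nat.factorial_mul_descFactorial (show m ≤ 2 + m by omega)
    rw [show 2 + m - m = 2 by omega] at this
    rw [Nat.factorial_two] at this
    rw [this, add_comm, Nat.factorial_succ, Nat.factorial_succ]
  have d2' : 2 * ((2 + m).descFactorial m : ℝ) = (m + 2) * ((m + 1) * m.factorial) := by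
    exact_mod_cast d2
  rw [d0, d1, zero_add, add_comm 1 m, add_comm 2 m] at h
  rw [add_comm 2 m] at d2'
  push_cast at h
  set a := p.coeff m
  set b := p.coeff (m + 1)
  set c := p.coeff (m + 2)
  have hF : (0 : ℝ) < m.factorial := by exact_mod_cast Nat.factorial_pos m
  have hm : (0 : ℝ) ≤ m := Nat.cast_nonneg m
  set F : ℝ := (m.factorial : ℝ)
  have h' : (F ^ 2 * (m + 1)) * ((m + 2) * (a * c)) ≤ (F ^ 2 * (m + 1)) * ((m + 1) * b ^ 2) := by
    calc _ = a * F * c * ((m + 2) * ((m + 1) * F)) := by ring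
      _ = _ := by rw [← d2']
      _ ≤ _ := by
        refine le_trans (le_of_eq ?_) (h.trans (le_of_eq ?_)) <;> ring
  have h2 : (m + 2) * (a * c) ≤ (m + 1) * b ^ 2 := le_of_mul_le_mul_left h' (by positivity)
  by_cases hac : a * c ≤ 0
  · exact hac.trans (sq_nonneg b)
  · push Not at hac
    have : ((m : ℝ) + 1) * (a * c) ≤ (m + 1) * b ^ 2 := by nlinarith
    exact le_of_mul_le_mul_left this (by positivity)

/-- Elementary symmetric polynomial over a finset. -/
noncomputable def eS {ι : Type*} (s : Finset ι) (j : ℕ) (lam : ι → ℝ) : ℝ :=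
  ∑ t ∈ Finset.powersetCard j s, ∏ i ∈ t, lam i

theorem eS_zero {ι : Type*} (s : Finset ι) (lam : ι → ℝ) : eS s 0 lam = 1 := by
  simp [eS]

theorem eS_insert {ι : Type*} [DecidableEq ι] (s : Finset ι) (i : ι) (hi : i ∉ s) (j : ℕ)
    (lam : ι → ℝ) : eS (insert i s) (j + 1) lam = eS s (j + 1) lam + lam i * eS s j lam := by
  unfold eS
  rw [Finset.powersetCard_succ_insert hi, Finset.sum_union, Finset.sum_image, Finset.mul_sum]
  · congr 1
    refine Finset.sum_congr rfl fun t ht => ?_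
    rw [Finset.prod_insert]
    exact fun h => hi ((Finset.mem_powersetCard.1 ht).1 h)
  · intro t ht u hu htu
    have h1 : i ∉ t := fun h => hi ((Finset.mem_powersetCard.1 ht).1 h)
    have h2 : i ∉ u := fun h => hi ((Finset.mem_powersetCard.1 hu).1 h)
    rw [← Finset.erase_insert h1, ← Finset.erase_insert h2, htu]
  · rw [Finset.disjoint_left]
    intro t ht hu
    obtain ⟨u, _, rfl⟩ := Finset.mem_image.1 hu
    exact hi ((Finset.mem_powersetCard.1 ht).1 (Finset.mem_insert_self _ _))

theorem eS_erase {ι : Type*} [DecidableEq ι] (s : Finset ι) (i : ι) (hi : i ∈ s) (j : ℕ)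
    (lam : ι → ℝ) :
    eS s (j + 1) lam = eS (s.erase i) (j + 1) lam + lam i * eS (s.erase i) j lam := by
  rw [← eS_insert _ _ (Finset.notMem_erase i s), Finset.insert_erase hi]

theorem eS_empty {ι : Type*} (j : ℕ) (lam : ι → ℝ) : eS (∅ : Finset ι) (j + 1) lam = 0 := by
  unfold eS
  rw [Finset.powersetCard_eq_empty.2 (by simp), Finset.sum_empty]

theorem eS_smul {ι : Type*} (s : Finset ι) (j : ℕ) (c : ℝ) (lam : ι → ℝ) :
    eS s j (c • lam) = c ^ j * eS s j lam := by
  unfold eS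
  rw [Finset.mul_sum]
  refine Finset.sum_congr rfl fun t ht => ?_
  simp [Finset.prod_mul_distrib, (Finset.mem_powersetCard.1 ht).2]

theorem eS_euler {ι : Type*} [DecidableEq ι] (s : Finset ι) (j : ℕ) (lam : ι → ℝ) :
    ((j : ℝ) + 1) * eS s (j + 1) lam = ∑ i ∈ s, lam i * eS (s.erase i) j lam := by
  induction s using Finset.induction_on generalizing j with
  | empty => simp [eS_empty]
  | insert a s ha ih =>
    rw [Finset.sum_insert ha, Finset.erase_insert ha, eS_insert _ _ ha]
    have hE : ∀ i ∈ s, (insert a s).erase i = insert a (s.erase i) := by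
      intro i hi
      rw [Finset.erase_insert_of_ne]
      rintro rfl; exact ha hi
    rw [Finset.sum_congr rfl fun i hi => by rw [hE i hi]]
    cases j with
    | zero =>
      have := ih 0
      simp only [eS_zero, Nat.cast_zero] at this ⊢
      linarith
    | succ j =>
      rw [Finset.sum_congr rfl fun i _ => by
        rw [eS_insert (s.erase i) a (fun h => ha (Finset.mem_of_mem_erase h)), mul_add,
          mul_left_comm]]
      rw [Finset.sum_add_distrib, ← Finset.mul_sum, ← ih, ← ih]
      push_cast
      ring

open Polynomial in
theorem eS_coeff {ι : Type*} [DecidableEq ι] (s : Finset ι) (lam : ι → ℝ) (j : ℕ) :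
    (∏ i ∈ s, (C (lam i) * X + C 1)).coeff j = eS s j lam := by
  induction s using Finset.induction_on generalizing j with
  | empty =>
    cases j with
    | zero => simp [eS_zero]
    | succ j => simp [eS_empty, coeff_one]
  | insert a s ha ih =>
    rw [Finset.prod_insert ha, add_mul, mul_assoc]
    cases j with
    | zero =>
      have := ih 0
      rw [coeff_add, coeff_C_mul, coeff_C_mul, this]
      simp [eS_zero]
    | succ j =>
      rw [eS_insert _ _ ha, coeff_add, coeff_C_mul, coeff_X_mul, ih, coeff_C_mul, ih]
      ring

open Polynomial in
theorem eS_newton {ι : Type*} [DecidableEq ι] (s : Finset ι) (lam : ι → ℝ) (m : ℕ) :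
    eS s m lam * eS s (m + 2) lam ≤ eS s (m + 1) lam ^ 2 := by
  simp only [← eS_coeff]
  apply newton_splits
  apply Splits.prod
  intro i _
  exact Splits.of_natDegree_le_one natDegree_linear_le

/-- Descent for the Garding cone. -/
theorem eS_descent {ι : Type*} [DecidableEq ι] (s : Finset ι) (i : ι) (hi : i ∈ s) (lam : ι → ℝ)
    (k : ℕ) (h : ∀ j ≤ k + 1, 0 < eS s j lam) : ∀ j ≤ k, 0 < eS (s.erase i) j lam := by
  intro j
  induction j with
  | zero => intro _; rw [eS_zero]; exact one_pos
  | succ j ih =>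
    intro hj
    have h0 := ih (by omega)
    have h1 := h (j + 1) (by omega)
    have h2 := h (j + 2) (by omega)
    rw [eS_erase s i hi] at h1 h2
    have hN := eS_newton (s.erase i) lam j
    by_contra! hneg
    generalize eS (s.erase i) j lam = a at *
    rw [show j + 1 + 1 = j + 2 from rfl] at *
    generalize eS (s.erase i) (j + 1) lam = b at *
    generalize eS (s.erase i) (j + 2) lam = c at *
    generalize lam i = x at *
    have e1 : 0 < a * (c + x * b) := mul_pos h0 h2
    have e2 : 0 ≤ (-b) * (b + x * a) := mul_nonneg (by linarith) h1.le
    nlinarith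

theorem par_superadd (x₁ y₁ x₂ y₂ y : ℝ) (h1 : 0 < x₁ + y₁) (h2 : 0 < x₂ + y₂)
    (hy : y₁ + y₂ ≤ y) :
    x₁ * y₁ / (x₁ + y₁) + x₂ * y₂ / (x₂ + y₂) ≤ (x₁ + x₂) * y / (x₁ + x₂ + y) := by
  have h3 : 0 < x₁ + x₂ + y := by linarith
  have e1 : x₁ * y₁ / (x₁ + y₁) = x₁ - x₁ ^ 2 / (x₁ + y₁) := by field_simp; ring
  have e2 : x₂ * y₂ / (x₂ + y₂) = x₂ - x₂ ^ 2 / (x₂ + y₂) := by field_simp; ring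
  have e3 : (x₁ + x₂) * y / (x₁ + x₂ + y) = (x₁ + x₂) - (x₁ + x₂) ^ 2 / (x₁ + x₂ + y) := by
    field_simp; ring
  rw [e1, e2, e3]
  have h4 : (x₁ + x₂) ^ 2 / (x₁ + x₂ + y) ≤ (x₁ + x₂) ^ 2 / ((x₁ + y₁) + (x₂ + y₂)) :=
    div_le_div_of_nonneg_left (sq_nonneg _) (by linarith) (by linarith)
  have h5 : (x₁ + x₂) ^ 2 / ((x₁ + y₁) + (x₂ + y₂)) ≤
      x₁ ^ 2 / (x₁ + y₁) + x₂ ^ 2 / (x₂ + y₂) := by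
    rw [div_add_div _ _ h1.ne' h2.ne', div_le_div_iff₀ (by linarith) (mul_pos h1 h2)]
    generalize x₁ + y₁ = c at *
    generalize x₂ + y₂ = d at *
    nlinarith [sq_nonneg (x₁ * d - x₂ * c)]
  linarith

theorem eS_term (a b x : ℝ) (ha : 0 < a) (h : 0 < b + x * a) :
    0 < x + b / a ∧ x * b / (b + x * a) = x * (b / a) / (x + b / a) := by
  have e : x + b / a = (b + x * a) / a := by field_simp; ring
  refine ⟨by rw [e]; exact div_pos h ha, ?_⟩
  rw [e]; field_simp

/-- Marcus-Lopes on the Garding cone. -/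
theorem eS_superadd {ι : Type*} [DecidableEq ι] (k : ℕ) : ∀ (s : Finset ι) (lam mu : ι → ℝ),
    (∀ j ≤ k + 1, 0 < eS s j lam) → (∀ j ≤ k + 1, 0 < eS s j mu) →
    (∀ j ≤ k + 1, 0 < eS s j (lam + mu)) ∧
    eS s (k + 1) lam / eS s k lam + eS s (k + 1) mu / eS s k mu ≤
      eS s (k + 1) (lam + mu) / eS s k (lam + mu) := by
  induction k with
  | zero =>
    intro s lam mu hl hm
    have key : eS s 1 (lam + mu) = eS s 1 lam + eS s 1 mu := by
      have := fun l : ι → ℝ => eS_euler s 0 l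
      simp only [eS_zero, Nat.cast_zero, zero_add, one_mul, mul_one] at this
      simp [this, Finset.sum_add_distrib]
    simp only [zero_add, eS_zero, div_one]
    refine ⟨?_, key.ge⟩
    intro j hj
    interval_cases j
    · rw [eS_zero]; exact one_pos
    · rw [key]; exact add_pos (hl 1 (by simp)) (hm 1 (by simp))
  | succ k ih =>
    intro s lam mu hl hm
    have hs := (ih s lam mu (fun j hj => hl j (by omega)) (fun j hj => hm j (by omega))).1
    have form : ∀ l : ι → ℝ, ((k : ℝ) + 1 + 1) * (eS s (k + 1 + 1) l / eS s (k + 1) l) =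
        ∑ i ∈ s, l i * eS (s.erase i) (k + 1) l / eS s (k + 1) l := by
      intro l
      have := eS_euler s (k + 1) l
      push_cast at this
      rw [← mul_div_assoc, this, Finset.sum_div]
    have main : ((k : ℝ) + 1 + 1) * (eS s (k + 1 + 1) lam / eS s (k + 1) lam) +
        ((k : ℝ) + 1 + 1) * (eS s (k + 1 + 1) mu / eS s (k + 1) mu) ≤
        ((k : ℝ) + 1 + 1) * (eS s (k + 1 + 1) (lam + mu) / eS s (k + 1) (lam + mu)) := by
      rw [form, form, form, ← Finset.sum_add_distrib]
      refine Finset.sum_le_sum fun i hi => ?_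
      have dl := eS_descent s i hi lam (k + 1) hl
      have dm := eS_descent s i hi mu (k + 1) hm
      obtain ⟨ds, dq⟩ := ih (s.erase i) lam mu dl dm
      have pl := hl (k + 1) (by omega)
      have pm := hm (k + 1) (by omega)
      have ps := hs (k + 1) le_rfl
      rw [eS_erase s i hi] at pl pm ps
      rw [eS_erase s i hi k lam, eS_erase s i hi k mu, eS_erase s i hi k (lam + mu)]
      obtain ⟨l1, l2⟩ := eS_term _ _ _ (dl k (by omega)) pl
      obtain ⟨m1, m2⟩ := eS_term _ _ _ (dm k (by omega)) pm
      obtain ⟨_, s2⟩ := eS_term _ _ _ (ds k (by omega)) ps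
      rw [l2, m2, s2]
      exact par_superadd _ _ _ _ _ l1 m1 dq
    have hk : (0 : ℝ) < (k : ℝ) + 1 + 1 := by positivity
    have main' := le_of_mul_le_mul_left ((mul_add _ _ _).trans_le main) hk
    refine ⟨?_, main'⟩
    intro j hj
    rcases Nat.lt_or_ge j (k + 1 + 1) with h | h
    · exact hs j (by omega)
    · obtain rfl : j = k + 1 + 1 := by omega
      have p : 0 < eS s (k + 1 + 1) (lam + mu) / eS s (k + 1) (lam + mu) :=
        lt_of_lt_of_le (add_pos (div_pos (hl _ le_rfl) (hl _ (by omega)))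
          (div_pos (hm _ le_rfl) (hm _ (by omega)))) main'
      exact (div_pos_iff_of_pos_right (hs _ le_rfl)).1 p

/-- Superadditivity of the geometric mean (Mahler). -/
theorem geom_superadd (s : Finset ℕ) (hs : s.Nonempty) (a b c : ℕ → ℝ)
    (ha : ∀ i ∈ s, 0 < a i) (hb : ∀ i ∈ s, 0 < b i) (hc : ∀ i ∈ s, a i + b i ≤ c i) :
    (∏ i ∈ s, a i) ^ ((1 : ℝ) / s.card) + (∏ i ∈ s, b i) ^ ((1 : ℝ) / s.card) ≤
      (∏ i ∈ s, c i) ^ ((1 : ℝ) / s.card) := by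
  have hN : (0 : ℝ) < s.card := by exact_mod_cast hs.card_pos
  have hcp : ∀ i ∈ s, 0 < c i := fun i hi => by linarith [ha i hi, hb i hi, hc i hi]
  have hP : 0 < ∏ i ∈ s, c i := Finset.prod_pos hcp
  have amgm : ∀ z : ℕ → ℝ, (∀ i ∈ s, 0 < z i) →
      (∏ i ∈ s, z i) ^ ((1 : ℝ) / s.card) ≤
        (∏ i ∈ s, c i) ^ ((1 : ℝ) / s.card) * ∑ i ∈ s, 1 / (s.card : ℝ) * (z i / c i) := by
    intro z hz
    have h := Real.geom_mean_le_arith_mean_weighted s (fun _ => 1 / (s.card : ℝ))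
      (fun i => z i / c i) (fun i _ => by positivity)
      (by rw [Finset.sum_const, nsmul_eq_mul]; field_simp)
      (fun i hi => (div_pos (hz i hi) (hcp i hi)).le)
    rw [Real.finsetProd_rpow _ _ (fun i hi => (div_pos (hz i hi) (hcp i hi)).le),
      Finset.prod_div_distrib, Real.div_rpow (Finset.prod_pos hz).le hP.le,
      div_le_iff₀ (Real.rpow_pos_of_pos hP _)] at h
    rw [mul_comm]; exact h
  have h1 := amgm a ha
  have h2 := amgm b hb
  have h3 : ∑ i ∈ s, 1 / (s.card : ℝ) * (a i / c i) + ∑ i ∈ s, 1 / (s.card : ℝ) * (b i / c i)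
      ≤ 1 := by
    rw [← Finset.sum_add_distrib]
    calc _ ≤ ∑ i ∈ s, 1 / (s.card : ℝ) := by
          refine Finset.sum_le_sum fun i hi => ?_
          rw [← mul_add, ← add_div]
          exact mul_le_of_le_one_right (by positivity) ((div_le_one (hcp i hi)).2 (hc i hi))
      _ = 1 := by rw [Finset.sum_const, nsmul_eq_mul]; field_simp
  have h4 := mul_le_mul_of_nonneg_left h3 (Real.rpow_pos_of_pos hP ((1 : ℝ) / s.card)).le
  rw [mul_add, mul_one] at h4
  linarith

theorem prod_tele (f : ℕ → ℝ) (l k : ℕ) (hlk : l ≤ k) (h : ∀ j ≤ k, f j ≠ 0) :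
    ∏ j ∈ Finset.Ico l k, f (j + 1) / f j = f k / f l := by
  induction k, hlk using Nat.le_induction with
  | base => simp [h l le_rfl]
  | succ k hk ih =>
    rw [Finset.prod_Ico_succ_top hk, ih fun j hj => h j (by omega)]
    have := h k (by omega)
    field_simp

theorem Fquot_eq (n k l : ℕ) (hlk : l < k) (hkn : k ≤ n) (lam : Fin n → ℝ)
    (h : ∀ j ≤ k, 0 < eS Finset.univ j lam) :
    Fquot n k l lam = (∏ j ∈ Finset.Ico l k, Hnorm n (j + 1) lam / Hnorm n j lam) ^
      ((1 : ℝ) / (Finset.Ico l k).card) := by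
  unfold Fquot
  rw [prod_tele (fun j => Hnorm n j lam) l k hlk.le, Nat.card_Ico, Nat.cast_sub hlk.le]
  intro j hj
  have hc : (n.choose j : ℝ) ≠ 0 := by
    exact_mod_cast (Nat.choose_pos (hj.trans hkn)).ne'
  exact div_ne_zero (ne_of_gt (h j hj)) hc

/-- Concavity of `F = (H_k/H_l)^{1/(k-l)}` on the Gårding cone `Γ_k`, for
`0 ≤ l < k ≤ n`. -/
theorem Fquot_concave (n k l : ℕ) (hlk : l < k) (hkn : k ≤ n)
    (lam mu : Fin n → ℝ) (hlam : lam ∈ gardingCone n k) (hmu : mu ∈ gardingCone n k)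
    (t : ℝ) (ht : t ∈ Set.Icc (0 : ℝ) 1)
    (hmix : (1 - t) • lam + t • mu ∈ gardingCone n k) :
    (1 - t) * Fquot n k l lam + t * Fquot n k l mu ≤
      Fquot n k l ((1 - t) • lam + t • mu) := by
  rcases eq_or_lt_of_le ht.1 with h0 | h0
  · subst h0; simp
  rcases eq_or_lt_of_le ht.2 with h1 | h1
  · subst h1; simp
  have conv : ∀ v ∈ gardingCone n k, ∀ j ≤ k, 0 < eS Finset.univ j v := by
    intro v hv j hj
    rcases Nat.eq_zero_or_pos j with rfl | hp
    · rw [eS_zero]; exact one_pos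
    · exact hv j hp hj
  have hl := conv _ hlam
  have hm := conv _ hmu
  have hx := conv _ hmix
  have t1 : 0 < 1 - t := by linarith
  have scal : ∀ c : ℝ, 0 < c → ∀ v : Fin n → ℝ, (∀ j ≤ k, 0 < eS Finset.univ j v) →
      (∀ j ≤ k, 0 < eS Finset.univ j (c • v)) ∧ c * Fquot n k l v = Fquot n k l (c • v) := by
    intro c hc v hv
    have hcv : ∀ j ≤ k, 0 < eS Finset.univ j (c • v) := fun j hj => by
      rw [eS_smul]; exact mul_pos (pow_pos hc _) (hv j hj)
    refine ⟨hcv, ?_⟩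
    have hC : ∀ j ≤ k, (0 : ℝ) < n.choose j := fun j hj => by
      exact_mod_cast Nat.choose_pos (hj.trans hkn)
    have hH : ∀ j ≤ k, 0 < Hnorm n j v := fun j hj => div_pos (hv j hj) (hC j hj)
    have hHs : ∀ j, Hnorm n j (c • v) = c ^ j * Hnorm n j v := fun j => by
      have := eS_smul Finset.univ j c v
      unfold Hnorm
      change eS Finset.univ j (c • v) / _ = c ^ j * (eS Finset.univ j v / _)
      rw [this, mul_div_assoc]
    unfold Fquot
    have hd : (0 : ℝ) < (k : ℝ) - l := sub_pos.2 (by exact_mod_cast hlk)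
    have e : Hnorm n k (c • v) / Hnorm n l (c • v) =
        c ^ ((k : ℝ) - l) * (Hnorm n k v / Hnorm n l v) := by
      rw [hHs, hHs, Real.rpow_sub hc, Real.rpow_natCast, Real.rpow_natCast, mul_div_mul_comm]
    rw [e, Real.mul_rpow (Real.rpow_pos_of_pos hc _).le
      (div_pos (hH k le_rfl) (hH l hlk.le)).le, ← Real.rpow_mul hc.le, mul_one_div_cancel hd.ne',
      Real.rpow_one]
  obtain ⟨hl', el⟩ := scal _ t1 lam hl
  obtain ⟨hm', em⟩ := scal _ h0 mu hm
  rw [el, em, Fquot_eq n k l hlk hkn _ hl', Fquot_eq n k l hlk hkn _ hm',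
    Fquot_eq n k l hlk hkn _ hx]
  have hC : ∀ j ≤ k, (0 : ℝ) < n.choose j := fun j hj => by
    exact_mod_cast Nat.choose_pos (hj.trans hkn)
  have hpos : ∀ v : Fin n → ℝ, (∀ j ≤ k, 0 < eS Finset.univ j v) → ∀ j ∈ Finset.Ico l k,
      0 < Hnorm n (j + 1) v / Hnorm n j v := by
    intro v hv j hj
    rw [Finset.mem_Ico] at hj
    exact div_pos (div_pos (hv _ (by omega)) (hC _ (by omega)))
      (div_pos (hv _ (by omega)) (hC _ (by omega)))
  refine geom_superadd _ (Finset.nonempty_Ico.2 hlk) _ _ _ (hpos _ hl') (hpos _ hm') ?_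
  intro j hj
  rw [Finset.mem_Ico] at hj
  have hq := (eS_superadd j Finset.univ ((1 - t) • lam) (t • mu)
    (fun i hi => hl' i (by omega)) (fun i hi => hm' i (by omega))).2
  have e : ∀ v : Fin n → ℝ, Hnorm n (j + 1) v / Hnorm n j v =
      ((n.choose j : ℝ) / n.choose (j + 1)) *
        (eS Finset.univ (j + 1) v / eS Finset.univ j v) := by
    intro v
    change (eS Finset.univ (j + 1) v / _) / (eS Finset.univ j v / _) = _
    rw [div_div_div_eq, div_mul_div_comm, mul_comm (n.choose j : ℝ),
      mul_comm (n.choose (j + 1) : ℝ)]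
  rw [e, e, e, ← mul_add]
  exact mul_le_mul_of_nonneg_left hq (div_pos (hC _ (by omega)) (hC _ (by omega))).le
end

section
/- Let n ≥ 1 and 1 ≤ k ≤ n, and define G(λ) := (σ_n(λ)/σ_{n−k}(λ))^{1/k} for λ ∈ ℝⁿ with all entries strictly positive. Then G is differentiable at each such λ and the sum of its partial derivatives satisfies ∑_{i=1}^n (∂G/∂λ_i)(λ) ≥ C(n,k)^{−1/k}, where C(n,k) is the binomial coefficient. -/
/-- The Hessian quotient operator `G(λ) = (σ_n(λ)/σ_{n−k}(λ))^{1/k}`. -/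
noncomputable def Gq (n k : ℕ) (lam : Fin n → ℝ) : ℝ :=
  (esym n n lam / esym n (n - k) lam) ^ ((1 : ℝ) / (k : ℝ))

open Finset in
noncomputable def esymA (n k : ℕ) (μ : Fin n → ℝ) (i : Fin n) : ℝ :=
  ∑ s ∈ (powersetCard k (univ : Finset (Fin n))).filter (fun s => i ∈ s), ∏ l ∈ s, μ l

open Finset in
lemma sum_esymA (n k : ℕ) (μ : Fin n → ℝ) : ∑ i, esymA n k μ i = k * esym n k μ := by
  unfold esymA esym
  simp_rw [sum_filter]
  rw [sum_comm, mul_sum]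
  refine sum_congr rfl fun s hs => ?_
  rw [← sum_filter]
  simp [(mem_powersetCard.1 hs).2]

open Finset in
lemma esymA_succ (n k : ℕ) (μ : Fin n → ℝ) (i : Fin n) :
    esymA n (k+1) μ i = μ i * (esym n k μ - esymA n k μ i) := by
  have h : esym n k μ - esymA n k μ i =
      ∑ s ∈ (powersetCard k (univ : Finset (Fin n))).filter (fun s => ¬ i ∈ s), ∏ l ∈ s, μ l := by
    unfold esym esymA
    rw [← sum_filter_add_sum_filter_not (powersetCard k univ) (fun s => i ∈ s)]
    ring
  rw [h, mul_sum]
  unfold esymA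
  refine sum_nbij' (fun s => s.erase i) (fun s => insert i s) ?_ ?_ ?_ ?_ ?_
  · intro s hs
    simp only [mem_filter, mem_powersetCard_univ] at hs ⊢
    refine ⟨?_, by simp⟩
    rw [card_erase_of_mem hs.2, hs.1]; rfl
  · intro s hs
    simp only [mem_filter, mem_powersetCard_univ] at hs ⊢
    refine ⟨?_, by simp⟩
    rw [card_insert_of_notMem hs.2, hs.1]
  · intro s hs
    simp only [mem_filter] at hs
    exact insert_erase hs.2
  · intro s hs
    simp only [mem_filter] at hs
    exact erase_insert hs.2
  · intro s hs
    simp only [mem_filter] at hs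
    exact (mul_prod_erase s μ hs.2).symm

open Finset in
lemma esymA_mono (n k : ℕ) (μ : Fin n → ℝ) (hμ : ∀ i, 0 < μ i) (i j : Fin n) (hij : μ i ≤ μ j) :
    esymA n k μ i ≤ esymA n k μ j := by
  have h : esymA n k μ j = ∑ s ∈ (powersetCard k (univ : Finset (Fin n))).filter (fun s => i ∈ s),
      ∏ l ∈ s, μ (Equiv.swap i j l) := by
    unfold esymA
    refine sum_nbij' (fun s => s.map (Equiv.swap i j).toEmbedding)
      (fun s => s.map (Equiv.swap i j).toEmbedding) ?_ ?_ ?_ ?_ ?_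
    · intro s hs
      simp only [mem_filter, mem_powersetCard_univ] at hs ⊢
      refine ⟨by simpa using hs.1, ?_⟩
      exact mem_map.2 ⟨j, hs.2, by simp⟩
    · intro s hs
      simp only [mem_filter, mem_powersetCard_univ] at hs ⊢
      refine ⟨by simpa using hs.1, ?_⟩
      exact mem_map.2 ⟨i, hs.2, by simp⟩
    · intro s _
      ext x; simp
    · intro s _
      ext x; simp
    · intro s _
      simp
  rw [h]
  unfold esymA
  refine sum_le_sum fun s hs => ?_
  simp only [mem_filter] at hs
  by_cases hj : j ∈ s
  · apply le_of_eq
    have h2 : s.map (Equiv.swap i j).toEmbedding = s := by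
      apply eq_of_subset_of_card_le
      · intro x hx
        obtain ⟨y, hy, rfl⟩ := mem_map.1 hx
        simp only [Equiv.coe_toEmbedding, Equiv.swap_apply_def]
        split_ifs
        exacts [hj, hs.2, hy]
      · simp
    conv_lhs => rw [← h2]
    simp
  · refine prod_le_prod (fun l _ => (hμ l).le) fun l hl => ?_
    by_cases hli : l = i
    · subst hli; simpa using hij
    · rw [Equiv.swap_apply_of_ne_of_ne hli]
      rintro rfl; exact hj hl

open Finset in
lemma cheb (n k : ℕ) (μ : Fin n → ℝ) (hμ : ∀ i, 0 < μ i) :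
    (∑ i, μ i) * (k * esym n k μ) ≤ n * ∑ i, μ i * esymA n k μ i := by
  rw [← sum_esymA]
  have : Monovary μ (esymA n k μ) := by
    intro i j hij
    by_contra hc
    exact absurd (esymA_mono n k μ hμ j i (not_le.1 hc).le) (not_le.2 hij)
  simpa using this.sum_mul_sum_le_card_mul_sum

open Finset in
lemma maclaurin (n k : ℕ) (hn : 1 ≤ n) (hk : k ≤ n) (μ : Fin n → ℝ) (hμ : ∀ i, 0 < μ i) :
    esym n k μ ≤ n.choose k * ((∑ i, μ i) / n) ^ k := by
  induction k with
  | zero => simp [esym]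
  | succ k ih =>
    have ih := ih (by omega)
    have hnpos : (0:ℝ) < n := by exact_mod_cast hn
    have h1 := cheb n k μ hμ
    have h2 := sum_esymA n (k+1) μ
    have h3 : ∑ i, esymA n (k+1) μ i = (∑ i, μ i) * esym n k μ - ∑ i, μ i * esymA n k μ i := by
      simp_rw [esymA_succ, mul_sub, sum_sub_distrib, sum_mul]
    have hm : 0 ≤ ∑ i, μ i := sum_nonneg fun i _ => (hμ i).le
    have h4 : ((n.choose (k+1) : ℕ) : ℝ) * (k+1) = n.choose k * (n - k) := by
      have := Nat.choose_succ_right_eq n k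
      have h5 : ((n - k : ℕ) : ℝ) = n - k := Nat.cast_sub (by omega)
      rw [← h5]; exact_mod_cast this
    have hnk : (0:ℝ) ≤ n - k := by
      have : (k:ℝ) ≤ n := by exact_mod_cast (by omega : k ≤ n)
      linarith
    set m := (∑ i, μ i) / n with hmdef
    have hme : ∑ i, μ i = n * m := by rw [hmdef]; field_simp
    have hm0 : 0 ≤ m := by positivity
    rw [hme] at h1 h3
    have h6 : m * (k * esym n k μ) ≤ ∑ i, μ i * esymA n k μ i := by
      refine le_of_mul_le_mul_left ?_ hnpos
      linarith
    push_cast at h2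
    have h7 : (k+1) * esym n (k+1) μ ≤ (n-k) * m * esym n k μ := by
      rw [← h2, h3]; linarith
    have h8 : (n-k) * m * esym n k μ ≤ (n-k) * m * (n.choose k * m ^ k) :=
      mul_le_mul_of_nonneg_left ih (mul_nonneg hnk hm0)
    have hk1 : (0:ℝ) < k + 1 := by positivity
    refine le_of_mul_le_mul_left ?_ hk1
    calc _ ≤ _ := h7.trans h8
      _ = (n.choose k * (n-k)) * m^(k+1) := by ring
      _ = _ := by rw [← h4]; ring

open Finset in
lemma esym_pos' (n k : ℕ) (hk : k ≤ n) (μ : Fin n → ℝ) (hμ : ∀ i, 0 < μ i) : 0 < esym n k μ := by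
  unfold esym
  apply sum_pos
  · intro s _; exact prod_pos fun i _ => hμ i
  · apply powersetCard_nonempty.2; simpa using hk

open Finset in
lemma esym_compl (n k : ℕ) (hk : k ≤ n) (lam : Fin n → ℝ) (h : ∀ i, 0 < lam i) :
    esym n (n-k) lam = esym n n lam * esym n k (fun i => (lam i)⁻¹) := by
  have h1 : esym n n lam = ∏ i, lam i := by
    have : powersetCard n (univ : Finset (Fin n)) = {univ} := by
      have h0 := powersetCard_self (univ : Finset (Fin n))
      rwa [card_univ, Fintype.card_fin] at h0
    unfold esym
    rw [this]; simp
  rw [h1]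
  unfold esym
  rw [mul_sum]
  refine sum_nbij' (fun s => sᶜ) (fun s => sᶜ) ?_ ?_ ?_ ?_ ?_
  · intro s hs
    simp only [mem_powersetCard_univ] at hs ⊢
    rw [card_compl, hs, Fintype.card_fin]; omega
  · intro s hs
    simp only [mem_powersetCard_univ] at hs ⊢
    rw [card_compl, hs, Fintype.card_fin]
  · intro s _; simp
  · intro s _; simp
  · intro s _
    rw [← prod_mul_prod_compl s lam, prod_inv_distrib, mul_assoc, mul_inv_cancel₀, mul_one]
    exact (prod_pos fun i _ => h i).ne'

lemma Gq_eq (n k : ℕ) (hk : k ≤ n) (lam : Fin n → ℝ) (h : ∀ i, 0 < lam i) :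
    Gq n k lam = (esym n k (fun i => (lam i)⁻¹)) ^ (-((1 : ℝ) / (k : ℝ))) := by
  have h1 := esym_pos' n n le_rfl lam h
  have h2 := esym_pos' n k hk (fun i => (lam i)⁻¹) (fun i => inv_pos.2 (h i))
  unfold Gq
  rw [esym_compl n k hk lam h, Real.rpow_neg h2.le, ← Real.inv_rpow h2.le]
  congr 1
  field_simp

open Finset in
lemma esym_deriv (n k : ℕ) (lam : Fin n → ℝ) (h : ∀ i, 0 < lam i) (i : Fin n) :
    HasDerivAt (fun t : ℝ => esym n k (fun j => (Function.update lam i t j)⁻¹))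
      (-((lam i)⁻¹ * esymA n k (fun j => (lam j)⁻¹) i)) (lam i) := by
  unfold esym esymA
  rw [sum_filter, mul_sum, ← sum_neg_distrib]
  apply HasDerivAt.fun_sum
  intro s _
  by_cases hi : i ∈ s
  · have he : (fun t : ℝ => ∏ j ∈ s, (Function.update lam i t j)⁻¹) =
        fun t => t⁻¹ * ∏ j ∈ s.erase i, (lam j)⁻¹ := by
      funext t
      rw [← mul_prod_erase s _ hi, Function.update_self]
      congr 1
      refine prod_congr rfl fun j hj => ?_
      rw [Function.update_of_ne (ne_of_mem_erase hj)]
    rw [he, if_pos hi, ← mul_prod_erase s _ hi]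
    refine ((hasDerivAt_inv (h i).ne').mul_const (∏ j ∈ s.erase i, (lam j)⁻¹)).congr_deriv ?_
    have := (h i).ne'
    field_simp
  · have he : (fun t : ℝ => ∏ j ∈ s, (Function.update lam i t j)⁻¹) =
        fun t => ∏ j ∈ s, (lam j)⁻¹ := by
      funext t
      refine prod_congr rfl fun j hj => ?_
      rw [Function.update_of_ne]
      rintro rfl; exact hi hj
    rw [he, if_neg hi]
    simpa using hasDerivAt_const (lam i) (∏ j ∈ s, (lam j)⁻¹)

/-- For `1 ≤ k ≤ n` and `λ` with all entries positive, `G = (σ_n/σ_{n−k})^{1/k}`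
is differentiable at `λ` and the sum of its partial derivatives is at least
`C(n,k)^{-1/k}`. -/
theorem sum_partials_Gq_ge (n k : ℕ) (hn : 1 ≤ n) (hk1 : 1 ≤ k) (hkn : k ≤ n)
    (lam : Fin n → ℝ) (hpos : ∀ i, 0 < lam i) :
    DifferentiableAt ℝ (Gq n k) lam ∧
    ∃ d : Fin n → ℝ,
      (∀ i, HasDerivAt (fun t : ℝ => Gq n k (Function.update lam i t)) (d i) (lam i)) ∧
      ((n.choose k : ℝ)) ^ (-((1 : ℝ) / (k : ℝ))) ≤ ∑ i, d i := by
  have hμ : ∀ i, 0 < (fun i => (lam i)⁻¹) i := fun i => inv_pos.2 (hpos i)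
  have hE := esym_pos' n k hkn _ hμ
  have hdiff : ∀ j, DifferentiableAt ℝ (esym n j) lam := by
    intro j
    unfold esym
    fun_prop
  constructor
  · have h1 := esym_pos' n n le_rfl lam hpos
    have h2 := esym_pos' n (n-k) (Nat.sub_le _ _) lam hpos
    unfold Gq
    simp_rw [div_eq_mul_inv (esym _ _ _)]
    exact ((hdiff n).fun_mul ((hdiff _).fun_inv h2.ne')).rpow_const
      (Or.inl (mul_pos h1 (inv_pos.2 h2)).ne')
  set μ : Fin n → ℝ := fun i => (lam i)⁻¹ with hμdef
  set E := esym n k μ with hEdef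
  have hkpos : (0:ℝ) < k := by exact_mod_cast hk1
  have hnpos : (0:ℝ) < n := by exact_mod_cast hn
  refine ⟨fun i => (1/k) * E ^ (-((1 : ℝ) / k) - 1) * (μ i * esymA n k μ i), ?_, ?_⟩
  · intro i
    have hd := (esym_deriv n k lam hpos i).rpow_const (p := -((1 : ℝ) / k)) (Or.inl (by
      simpa only [Function.update_eq_self] using hE.ne'))
    simp only [Function.update_eq_self] at hd
    have hd' := hd.congr_of_eventuallyEq (f₁ := fun t : ℝ => Gq n k (Function.update lam i t)) (by
      filter_upwards [lt_mem_nhds (hpos i)] with t ht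
      apply Gq_eq n k hkn
      intro j
      by_cases hj : j = i
      · subst hj; simpa using ht
      · simpa [Function.update_of_ne hj] using hpos j)
    refine hd'.congr_deriv ?_
    ring
  · rw [← Finset.mul_sum]
    have hc := cheb n k μ hμ
    have hm := maclaurin n k hn hkn μ hμ
    have hs : 0 < ∑ i, μ i := by
      have : Nonempty (Fin n) := ⟨⟨0, hn⟩⟩
      exact Finset.sum_pos (fun i _ => hμ i) Finset.univ_nonempty
    set m := (∑ i, μ i) / n with hmdef
    have hme : ∑ i, μ i = n * m := by rw [hmdef]; field_simp
    have hm0 : 0 < m := by positivity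
    rw [hme] at hc
    have h6 : m * (k * E) ≤ ∑ i, μ i * esymA n k μ i := by
      refine le_of_mul_le_mul_left ?_ hnpos
      linarith
    have hC : (0:ℝ) < n.choose k := by exact_mod_cast Nat.choose_pos hkn
    have h7 : ((n.choose k : ℝ) * m ^ k) ^ (-((1 : ℝ) / k)) ≤ E ^ (-((1 : ℝ) / k)) :=
      Real.rpow_le_rpow_of_nonpos hE hm (by
        have : 0 < (1:ℝ)/k := by positivity
        linarith)
    have h8 : ((n.choose k : ℝ) * m ^ k) ^ (-((1 : ℝ) / k)) * m
        = (n.choose k : ℝ) ^ (-((1 : ℝ) / k)) := by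
      rw [Real.mul_rpow hC.le (by positivity), ← Real.rpow_natCast m k, ← Real.rpow_mul hm0.le]
      have : (k:ℝ) * (-(1 / k)) = -1 := by field_simp
      rw [this, Real.rpow_neg_one]
      field_simp
    rw [← h8]
    calc _ ≤ E ^ (-((1 : ℝ) / k)) * m := mul_le_mul_of_nonneg_right h7 hm0.le
      _ = (1/k) * E ^ (-((1 : ℝ) / k) - 1) * (m * (k * E)) := by
        rw [Real.rpow_sub_one hE.ne']
        field_simp
      _ ≤ _ := mul_le_mul_of_nonneg_left h6 (by positivity)
end

section
/- Let n ≥ 1, 1 ≤ k ≤ n, c > 0, and let λ ∈ ℝⁿ have all entries strictly positive and satisfy σ_n(λ) = c·σ_{n−k}(λ). Then σ_n(λ) ≥ (C(n,k)·c)^{n/k}, where C(n,k) is the binomial coefficient. -/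
/-- A sum-zero family has zero total over all `m`-subsets. -/
lemma sum_powersetCard_sum_eq_zero (n m : ℕ) (x : Fin n → ℝ) (hx : ∑ i, x i = 0) :
    ∑ s ∈ Finset.powersetCard m (Finset.univ : Finset (Fin n)), ∑ i ∈ s, x i = 0 := by
  rcases Nat.eq_zero_or_pos m with rfl | hm
  · simp
  have h1 : ∀ s ∈ Finset.powersetCard m (Finset.univ : Finset (Fin n)),
      ∑ i ∈ s, x i = ∑ i, if {i} ⊆ s then x i else 0 := by
    intro s _
    simp [Finset.sum_ite_mem]
  rw [Finset.sum_congr rfl h1, Finset.sum_comm]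
  have h2 : ∀ i : Fin n, (∑ s ∈ Finset.powersetCard m (Finset.univ : Finset (Fin n)),
      if {i} ⊆ s then x i else 0) = ((n - 1).choose (m - 1) : ℝ) * x i := by
    intro i
    rw [← Finset.sum_filter, Finset.sum_const,
      Finset.card_filter_powersetCard_subset _ _ _ (by simp) (by simp; omega)]
    simp
  simp_rw [h2]
  rw [← Finset.mul_sum, hx, mul_zero]

/-- If `1 ≤ k ≤ n`, `c > 0`, `λ` has all entries positive and
`σ_n(λ) = c·σ_{n−k}(λ)`, then `σ_n(λ) ≥ (C(n,k)·c)^{n/k}`. -/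
theorem esym_top_lower_bound (n k : ℕ) (hn : 1 ≤ n) (hk1 : 1 ≤ k) (hkn : k ≤ n)
    (c : ℝ) (hc : 0 < c) (lam : Fin n → ℝ) (hpos : ∀ i, 0 < lam i)
    (heq : esym n n lam = c * esym n (n - k) lam) :
    ((n.choose k : ℝ) * c) ^ ((n : ℝ) / (k : ℝ)) ≤ esym n n lam := by
  have hn0 : (0 : ℝ) < n := by exact_mod_cast hn
  have hk0 : (0 : ℝ) < k := by exact_mod_cast hk1
  set a : ℝ := (∑ i, Real.log (lam i)) / n with ha
  have hP : esym n n lam = Real.exp (n * a) := by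
    have h : Finset.powersetCard n (Finset.univ : Finset (Fin n)) = {Finset.univ} := by
      simpa using Finset.powersetCard_self (Finset.univ : Finset (Fin n))
    rw [esym, h, Finset.sum_singleton, ha, mul_div_cancel₀ _ hn0.ne', Real.exp_sum]
    exact Finset.prod_congr rfl fun i _ => (Real.exp_log (hpos i)).symm
  have hx : ∑ i, (Real.log (lam i) - a) = 0 := by
    rw [Finset.sum_sub_distrib]
    simp only [Finset.sum_const, Finset.card_univ, Fintype.card_fin, nsmul_eq_mul]
    rw [ha]
    field_simp
    ring
  have hS : (n.choose k : ℝ) * Real.exp ((n - k : ℕ) * a) ≤ esym n (n - k) lam := by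
    have h0 := sum_powersetCard_sum_eq_zero n (n - k) _ hx
    have h1 : (n.choose k : ℝ) * Real.exp ((n - k : ℕ) * a) =
        ∑ s ∈ Finset.powersetCard (n - k) (Finset.univ : Finset (Fin n)),
          (∑ i ∈ s, (Real.log (lam i) - a) + 1) * Real.exp ((n - k : ℕ) * a) := by
      rw [← Finset.sum_mul, Finset.sum_add_distrib, h0]
      simp [Nat.choose_symm hkn]
    rw [h1, esym]
    refine Finset.sum_le_sum fun s hs => ?_
    have hcard := (Finset.mem_powersetCard.1 hs).2
    refine (mul_le_mul_of_nonneg_right (Real.add_one_le_exp _) (Real.exp_pos _).le).trans_eq ?_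
    rw [← Real.exp_add, Finset.sum_sub_distrib, Finset.sum_const, hcard, nsmul_eq_mul,
      sub_add_cancel, Real.exp_sum]
    exact Finset.prod_congr rfl fun i _ => Real.exp_log (hpos i)
  have hkey : (n.choose k : ℝ) * c ≤ Real.exp (k * a) := by
    have h2 := mul_le_mul_of_nonneg_left hS hc.le
    rw [← heq, hP] at h2
    have h3 : Real.exp (n * a) = Real.exp (k * a) * Real.exp ((n - k : ℕ) * a) := by
      rw [← Real.exp_add, Nat.cast_sub hkn]
      ring_nf
    rw [h3] at h2
    refine le_of_mul_le_mul_right ?_ (Real.exp_pos ((n - k : ℕ) * a))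
    linarith
  calc ((n.choose k : ℝ) * c) ^ ((n : ℝ) / (k : ℝ))
      ≤ Real.exp (k * a) ^ ((n : ℝ) / (k : ℝ)) :=
        Real.rpow_le_rpow (by positivity) hkey (by positivity)
    _ = esym n n lam := by
        rw [hP, ← Real.exp_mul]
        congr 1
        field_simp
end

section
/- Let n ≥ 1, 1 ≤ k ≤ n, and λ ∈ ℝⁿ. For t ∈ ℝ write 𝟙 + tλ := (1 + tλ₁, …, 1 + tλ_n), and define Q(t) := H_n(𝟙 + tλ)/H_{n−k}(𝟙 + tλ) on a neighborhood of t = 0 (on which the denominator is positive). Then Q(0) = 1, Q′(0) = k·H₁(λ), and Q″(0) = k(2n − k − 1)·H₂(λ) − 2k(n − k)·H₁(λ)². In particular, the coefficient of H₁(λ)² in the second-order Taylor coefficient a₂ = Q″(0)/2 equals −k(n−k). -/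
/-- The curvature quotient `Q(t) = H_n(𝟙 + tλ)/H_{n−k}(𝟙 + tλ)` of the perturbed
hypersurface. -/
noncomputable def Qfun (n k : ℕ) (lam : Fin n → ℝ) (t : ℝ) : ℝ :=
  Hnorm n n (fun i => 1 + t * lam i) / Hnorm n (n - k) (fun i => 1 + t * lam i)

open Finset in
theorem card_supersets (n m : ℕ) (u : Finset (Fin n)) (hu : u.card ≤ m) :
    ((powersetCard m (univ : Finset (Fin n))).filter (fun s => u ⊆ s)).card
      = (n - u.card).choose (m - u.card) := by
  have h1 : (n - u.card).choose (m - u.card) = (powersetCard (m - u.card) uᶜ).card := by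
    rw [card_powersetCard, card_compl, Fintype.card_fin]
  rw [h1]
  refine card_nbij' (fun s => s \ u) (fun s => s ∪ u) ?_ ?_ ?_ ?_
  · intro s hs
    simp only [coe_filter, mem_powersetCard, subset_univ, true_and, Set.mem_ofPred_eq] at hs
    simp only [mem_coe, mem_powersetCard]
    refine ⟨fun x hx => by simp at hx ⊢; exact hx.2, ?_⟩
    rw [card_sdiff_of_subset hs.2, hs.1]
  · intro s hs
    simp only [mem_coe, mem_powersetCard] at hs
    simp only [coe_filter, mem_powersetCard, subset_univ, true_and, Set.mem_ofPred_eq]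
    refine ⟨?_, subset_union_right⟩
    rw [card_union_of_disjoint, hs.2]
    · omega
    · rw [disjoint_left]
      intro x hx hxu
      have := hs.1 hx
      simp at this
      exact this hxu
  · intro s hs
    simp only [coe_filter, Set.mem_ofPred_eq] at hs
    exact sdiff_union_of_subset hs.2
  · intro s hs
    simp only [mem_coe, mem_powersetCard] at hs
    ext x
    have := @hs.1 x
    simp at this ⊢
    tauto

open Finset in
theorem esym_expand (n m : ℕ) (lam : Fin n → ℝ) (t : ℝ) :
    esym n m (fun i => 1 + t * lam i)
      = ∑ j ∈ range (m + 1), ((n - j).choose (m - j) : ℝ) * esym n j lam * t ^ j := by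
  unfold esym
  have h1 : ∀ s ∈ powersetCard m (univ : Finset (Fin n)), ∏ i ∈ s, (1 + t * lam i)
      = ∑ u ∈ (univ : Finset (Finset (Fin n))).filter (fun u => u.card ∈ range (m + 1)),
          if u ⊆ s then t ^ u.card * ∏ i ∈ u, lam i else 0 := by
    intro s hs
    rw [prod_one_add, ← sum_filter, filter_filter]
    refine sum_congr ?_ ?_
    · ext u
      simp only [mem_powerset, mem_filter, mem_univ, true_and, mem_range]
      refine ⟨fun h => ⟨?_, h⟩, fun h => h.2⟩
      have := card_le_card h
      rw [(mem_powersetCard.1 hs).2] at this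
      omega
    · intro u _
      rw [prod_mul_distrib, prod_const]
  rw [sum_congr rfl h1, sum_comm]
  rw [← sum_fiberwise_of_maps_to (s := (univ : Finset (Finset (Fin n))).filter
    (fun u => u.card ∈ range (m + 1))) (t := range (m + 1)) (g := fun u => u.card)
    (fun u hu => (mem_filter.1 hu).2)]
  refine sum_congr rfl fun j hj => ?_
  rw [mul_sum, sum_mul]
  refine sum_congr ?_ ?_
  · ext u
    simp only [mem_filter, mem_univ, true_and, mem_powersetCard, subset_univ]
    refine ⟨fun h => h.2, fun h => ⟨h ▸ hj, h⟩⟩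
  · intro u hu
    have hu' := (mem_powersetCard.1 hu).2
    have hj' := mem_range.1 hj
    rw [← sum_filter, sum_const, card_supersets n m u (by omega), hu', nsmul_eq_mul]
    ring

/-- The polynomial `t ↦ H_m(𝟙 + tλ)`. -/
noncomputable def Hpoly (n m : ℕ) (lam : Fin n → ℝ) : Polynomial ℝ :=
  ∑ j ∈ Finset.range (m + 1), Polynomial.C ((m.choose j : ℝ) * Hnorm n j lam) * Polynomial.X ^ j

theorem Hpoly_coeff (n m : ℕ) (lam : Fin n → ℝ) (j : ℕ) :
    (Hpoly n m lam).coeff j = (m.choose j : ℝ) * Hnorm n j lam := by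
  unfold Hpoly
  simp only [Polynomial.finsetSum_coeff, Polynomial.coeff_C_mul_X_pow]
  rw [Finset.sum_ite_eq]
  split_ifs with h
  · rfl
  · rw [Nat.choose_eq_zero_of_lt (by simpa using h)]
    simp

theorem Hpoly_eval (n m : ℕ) (hm : m ≤ n) (lam : Fin n → ℝ) (t : ℝ) :
    Hnorm n m (fun i => 1 + t * lam i) = (Hpoly n m lam).eval t := by
  unfold Hpoly
  rw [Hnorm, esym_expand, Polynomial.eval_finsetSum, Finset.sum_div]
  refine Finset.sum_congr rfl fun j hj => ?_
  have hj' := Finset.mem_range.1 hj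
  have h := Nat.choose_mul (n := n) (show j ≤ m by omega)
  have h' : (n.choose m : ℝ) * m.choose j = n.choose j * (n - j).choose (m - j) := by
    exact_mod_cast h
  have p1 : (n.choose m : ℝ) ≠ 0 := by exact_mod_cast (Nat.choose_pos hm).ne'
  have p2 : (n.choose j : ℝ) ≠ 0 := by
    exact_mod_cast (Nat.choose_pos (show j ≤ n by omega)).ne'
  simp only [Polynomial.eval_mul, Polynomial.eval_C, Polynomial.eval_pow, Polynomial.eval_X, Hnorm]
  field_simp
  linear_combination (-(esym n j lam * t ^ j)) * h'

theorem deriv_quot (p q : Polynomial ℝ) (hp : p.coeff 0 = 1) (hq : q.coeff 0 = 1) :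
    deriv (fun t => p.eval t / q.eval t) 0 = p.coeff 1 - q.coeff 1 ∧
    deriv (deriv (fun t => p.eval t / q.eval t)) 0
      = 2 * (p.coeff 2 - q.coeff 2 - q.coeff 1 * (p.coeff 1 - q.coeff 1)) := by
  have e0 : ∀ r : Polynomial ℝ, r.eval 0 = r.coeff 0 := fun r =>
    (Polynomial.coeff_zero_eq_eval_zero r).symm
  have d1 : ∀ r : Polynomial ℝ, r.derivative.eval 0 = r.coeff 1 := fun r => by
    rw [e0, Polynomial.coeff_derivative]; simp
  have d2 : ∀ r : Polynomial ℝ, r.derivative.derivative.eval 0 = 2 * r.coeff 2 := fun r => by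
    rw [e0, Polynomial.coeff_derivative, Polynomial.coeff_derivative]; norm_num; ring
  have hq0 : q.eval 0 ≠ 0 := by rw [e0, hq]; exact one_ne_zero
  have hd : ∀ t, q.eval t ≠ 0 → deriv (fun t => p.eval t / q.eval t) t
      = (p.derivative * q - p * q.derivative).eval t / (q ^ 2).eval t := by
    intro t ht
    rw [((p.hasDerivAt t).fun_div (q.hasDerivAt t) ht).deriv]
    simp
  refine ⟨?_, ?_⟩
  · rw [hd 0 hq0]
    simp [e0 p, e0 q, d1, hp, hq]
  · have hev : deriv (fun t => p.eval t / q.eval t) =ᶠ[nhds 0]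
        fun t => (p.derivative * q - p * q.derivative).eval t / (q ^ 2).eval t := by
      filter_upwards [q.continuous.continuousAt.eventually_ne hq0] with t ht
      exact hd t ht
    rw [hev.deriv_eq, (((p.derivative * q - p * q.derivative).hasDerivAt 0).fun_div
      ((q ^ 2).hasDerivAt 0) (by simpa using hq0)).deriv]
    simp only [Polynomial.derivative_sub, Polynomial.derivative_mul, Polynomial.eval_sub,
      Polynomial.eval_add, Polynomial.eval_mul, d1 p, d1 q, d2, e0 p, e0 q, hp, hq,
      pow_two]
    ring

/-- Taylor expansion at `t = 0` of `Q(t) = H_n(𝟙+tλ)/H_{n−k}(𝟙+tλ)`: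
`Q(0) = 1`, `Q′(0) = k·H₁(λ)` and
`Q″(0) = k(2n−k−1)·H₂(λ) − 2k(n−k)·H₁(λ)²`; in particular the coefficient of
`H₁(λ)²` in `a₂ = Q″(0)/2` is `−k(n−k)`. -/
theorem quotient_taylor_expansion (n k : ℕ) (hn : 1 ≤ n) (hk1 : 1 ≤ k) (hkn : k ≤ n)
    (lam : Fin n → ℝ) :
    Qfun n k lam 0 = 1 ∧
    deriv (Qfun n k lam) 0 = (k : ℝ) * Hnorm n 1 lam ∧
    deriv (deriv (Qfun n k lam)) 0 =
      (k : ℝ) * (2 * (n : ℝ) - (k : ℝ) - 1) * Hnorm n 2 lam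
        - 2 * (k : ℝ) * ((n : ℝ) - (k : ℝ)) * (Hnorm n 1 lam) ^ 2 := by
  have hQ : Qfun n k lam = fun t => (Hpoly n n lam).eval t / (Hpoly n (n - k) lam).eval t := by
    funext t
    rw [Qfun, Hpoly_eval n n le_rfl, Hpoly_eval n (n - k) (Nat.sub_le n k)]
  have h0 : Hnorm n 0 lam = 1 := by simp [Hnorm, esym]
  have c0 : ∀ m, (Hpoly n m lam).coeff 0 = 1 := fun m => by rw [Hpoly_coeff, h0]; simp
  obtain ⟨h1, h2⟩ := deriv_quot (Hpoly n n lam) (Hpoly n (n - k) lam) (c0 _) (c0 _)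
  rw [hQ]
  refine ⟨?_, ?_, ?_⟩
  · simp only [← Polynomial.coeff_zero_eq_eval_zero, c0, div_one]
  · rw [h1]
    simp only [Hpoly_coeff, Nat.choose_one_right, Nat.cast_sub hkn]
    ring
  · rw [h2]
    simp only [Hpoly_coeff, Nat.choose_one_right, Nat.cast_choose_two, Nat.cast_sub hkn]
    ring
end
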